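/- For every integer k ≥ 1 and every w > 2, one has Δ_{k,1}(w) = ( (2k)! / (√π · k! · Γ(k+1/2)) ) ∫_0^1 t^{k−1/2} (1−t)^{−1/2} / (w − 2 + 4t) dt. Consequently Δ_{k,1} is completely monotone on (2,∞), i.e. it is smooth there with (−1)^n Δ_{k,1}^{(n)}(w) ≥ 0 for all n ≥ 0 and w > 2. -/

import Mathlib

open Set MeasureTheory Filter

noncomputable def Pk (k : ℕ) (x : ℝ) : ℝ :=
  ∑ n ∈ Finset.range (k + 1), ((2 * k).choose (n + k) : ℝ) * (-x) ^ n

noncomputable def Pkhat (k : ℕ) (x : ℝ) : ℝ :=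
  Pk k x - ((2 * k).choose k : ℝ)

/-- The kernel `Φ_k(x,t)`. -/
noncomputable def Phi (k : ℕ) (x t : ℝ) : ℝ :=
  x⁻¹ * (if t ≤ x then Pk k (t / x) else -Pkhat k (x / t))

/-- The function `ψ_k`. -/
noncomputable def psiK (k : ℕ) (y : ℝ) : ℝ :=
  if 1 ≤ y then Pk k y⁻¹ else -Pkhat k y

/-- `f` is a `k`-Stieltjes function on `(0,∞)` (for `k ≥ 2`). -/
def IsStieltjesK (k : ℕ) (f : ℝ → ℝ) : Prop :=
  (∀ x > 0, 0 ≤ f x) ∧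
  ContDiffOn ℝ (2 * k - 3 : ℕ) f (Ioi 0) ∧
  (∀ n, 1 ≤ n → n ≤ k - 1 → ∀ x > 0,
    0 ≤ (-1 : ℝ) ^ (n - 1) * iteratedDeriv (2 * n - 1) (fun y => y ^ n * f y) x) ∧
  ConvexOn ℝ (Ioi 0)
    (fun x => (-1 : ℝ) ^ (k - 1) * iteratedDeriv (2 * k - 3) (fun y => y ^ k * f y) x)

/-- `g` is `k`-monotone on the open interval `I`. -/
def KMonotoneOn (k : ℕ) (g : ℝ → ℝ) (I : Set ℝ) : Prop :=
  if k = 1 then (∀ x ∈ I, 0 ≤ g x) ∧ AntitoneOn g I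
  else
    ContDiffOn ℝ (k - 2 : ℕ) g I ∧
    ∀ n ≤ k - 2,
      (∀ x ∈ I, 0 ≤ (-1 : ℝ) ^ n * iteratedDeriv n g x) ∧
      AntitoneOn (fun x => (-1 : ℝ) ^ n * iteratedDeriv n g x) I ∧
      ConvexOn ℝ I (fun x => (-1 : ℝ) ^ n * iteratedDeriv n g x)

/-- `v(w) = (w + √(w²−4))/2`. -/
noncomputable def vOf (w : ℝ) : ℝ := (w + Real.sqrt (w ^ 2 - 4)) / 2

/-- `F_u(w) = f(uv) f(u/v)`. -/
noncomputable def Fu (f : ℝ → ℝ) (u w : ℝ) : ℝ := f (u * vOf w) * f (u / vOf w)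

/-- `f` is `k`-hyperbolically monotone. -/
def IsHMk (k : ℕ) (f : ℝ → ℝ) : Prop :=
  (∀ x > 0, 0 ≤ f x) ∧ ∀ u > 0, KMonotoneOn k (Fu f u) (Ioi 2)

/-- `f` is power regular `k`-hyperbolically monotone. -/
def IsPRHMk (k : ℕ) (f : ℝ → ℝ) : Prop :=
  ∀ p > 0, IsHMk k (fun x => f x ^ p)

/-- `ψ_f(x) = -x (log f)'(x)`. -/
noncomputable def psiF (f : ℝ → ℝ) (x : ℝ) : ℝ := -x * deriv (fun y => Real.log (f y)) x

/-- `Δ_u(f)`. -/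
noncomputable def DeltaU (f : ℝ → ℝ) (u w : ℝ) : ℝ :=
  (psiF f (u * vOf w) - psiF f (u / vOf w)) / (vOf w - (vOf w)⁻¹)

/-- `Δ_{k,u}`. -/
noncomputable def DeltaKU (k : ℕ) (u w : ℝ) : ℝ :=
  (psiK k (u * vOf w) - psiK k (u / vOf w)) / (vOf w - (vOf w)⁻¹)

/-! Both sides of the integral formula satisfy `D (k + 1) = C(2k, k) - (w - 2) * D k` and agree at
`k = 0`. For `Δ_{k,1}` this is Pascal's rule applied twice to the coefficients of `P_k`, together
with `v + v⁻¹ = w`. The constant in front of the integral is `4 ^ k / π`, so for the integral it is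
the splitting `4 t = (w - 2 + 4 t) - (w - 2)` together with
`B(k + 1/2, 1/2) = π C(2k, k) / 4 ^ k`; at `k = 0` the integrand has an elementary primitive.
Complete monotonicity then follows by differentiating under the integral sign. -/

section CompletelyMonotone

/-- Complete monotonicity of `f` on `s`. As the derivatives are taken in `ℝ`, not within `s`, this
is the usual notion only when `s` is open. -/
def CompletelyMonotoneOn (f : ℝ → ℝ) (s : Set ℝ) : Prop :=
  ContDiffOn ℝ (⊤ : ℕ∞) f s ∧ ∀ n : ℕ, ∀ x ∈ s, 0 ≤ (-1 : ℝ) ^ n * iteratedDeriv n f x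

variable {f g : ℝ → ℝ} {s : Set ℝ}

lemma CompletelyMonotoneOn.congr (hg : CompletelyMonotoneOn g s) (hs : IsOpen s)
    (hfg : EqOn f g s) : CompletelyMonotoneOn f s := by
  refine ⟨hg.1.congr hfg, fun n x hx => ?_⟩
  rw [hfg.iteratedDeriv_of_isOpen hs n hx]
  exact hg.2 n x hx

lemma CompletelyMonotoneOn.const_mul (hf : CompletelyMonotoneOn f s) {c : ℝ} (hc : 0 ≤ c) :
    CompletelyMonotoneOn (fun x => c * f x) s := by
  refine ⟨contDiffOn_const.mul hf.1, fun n x hx => ?_⟩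
  rw [iteratedDeriv_const_mul_field, mul_left_comm]
  exact mul_nonneg hc (hf.2 n x hx)

section DerivativeSequence

variable {𝕜 E : Type*} [NontriviallyNormedField 𝕜] [NormedAddCommGroup E] [NormedSpace 𝕜 E]
  {F : ℕ → 𝕜 → E} {U : Set 𝕜}

lemma eqOn_iteratedDeriv_of_hasDerivAt_succ (hU : IsOpen U)
    (hF : ∀ n, ∀ x ∈ U, HasDerivAt (F n) (F (n + 1) x) x) (n : ℕ) :
    EqOn (iteratedDeriv n (F 0)) (F n) U := by
  induction n with
  | zero => simp only [iteratedDeriv_zero, eqOn_refl]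
  | succ n ih =>
    intro x hx
    rw [iteratedDeriv_succ, (ih.eventuallyEq_of_mem (hU.mem_nhds hx)).deriv_eq, (hF n x hx).deriv]

lemma contDiffOn_of_hasDerivAt_succ (hU : IsOpen U)
    (hF : ∀ n, ∀ x ∈ U, HasDerivAt (F n) (F (n + 1) x) x) :
    ContDiffOn 𝕜 (⊤ : ℕ∞) (F 0) U := by
  refine contDiffOn_of_differentiableOn_deriv fun n _ => ?_
  have hn : EqOn (iteratedDerivWithin n (F 0) U) (F n) U :=
    (iteratedDerivWithin_of_isOpen hU).trans (eqOn_iteratedDeriv_of_hasDerivAt_succ hU hF n)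
  exact DifferentiableOn.congr
    (fun x hx => (hF n x hx).differentiableAt.differentiableWithinAt) hn

end DerivativeSequence

lemma completelyMonotoneOn_of_hasDerivAt_neg_succ {F : ℕ → ℝ → ℝ} (hs : IsOpen s)
    (hF : ∀ n, ∀ x ∈ s, HasDerivAt (F n) (-F (n + 1) x) x) (hF₀ : ∀ n, ∀ x ∈ s, 0 ≤ F n x) :
    CompletelyMonotoneOn (F 0) s := by
  let G : ℕ → ℝ → ℝ := fun n x => (-1) ^ n * F n x
  have hG : ∀ n, ∀ x ∈ s, HasDerivAt (G n) (G (n + 1) x) x := fun n x hx =>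
    ((hF n x hx).const_mul ((-1) ^ n)).congr_deriv (by simp only [G]; ring)
  have hG₀ : G 0 = F 0 := by simp only [G, pow_zero, one_mul]
  rw [← hG₀]
  refine ⟨contDiffOn_of_hasDerivAt_succ hs hG, fun n x hx => ?_⟩
  rw [eqOn_iteratedDeriv_of_hasDerivAt_succ hs hG n hx, ← mul_assoc, ← mul_pow,
    neg_one_mul, neg_neg, one_pow, one_mul]
  exact hF₀ n x hx

end CompletelyMonotone

section StieltjesTransform

lemma hasDerivAt_const_div_add_pow (c a : ℝ) (n : ℕ) {x : ℝ} (hx : x + a ≠ 0) :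
    HasDerivAt (fun x => c / (x + a) ^ n) (-n * (c / (x + a) ^ (n + 1))) x := by
  have h := ((((hasDerivAt_id' x).add_const a).fun_pow n).fun_inv (pow_ne_zero n hx)).const_mul c
  simp only [← div_eq_mul_inv] at h
  refine h.congr_deriv ?_
  rcases n with _ | n
  · simp
  · rw [Nat.add_sub_cancel]
    field_simp
    ring

variable {α : Type*} [MeasurableSpace α] {μ : Measure α} {g φ : α → ℝ} {c : ℝ}

lemma integrable_div_add_pow (hg : Integrable g μ) (hφ : AEMeasurable φ μ)
    (hc : ∀ᵐ t ∂μ, -c ≤ φ t) {w : ℝ} (hw : c < w) (n : ℕ) :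
    Integrable (fun t => g t / (w + φ t) ^ n) μ := by
  have hmeas : AEStronglyMeasurable (fun t => ((w + φ t) ^ n)⁻¹) μ :=
    ((hφ.const_add w).pow_const n).inv.aestronglyMeasurable
  simp only [div_eq_mul_inv]
  refine hg.mul_bdd (c := ((w - c) ^ n)⁻¹) hmeas ?_
  filter_upwards [hc] with t ht
  have hwc : 0 < w - c := sub_pos.2 hw
  have hle : w - c ≤ w + φ t := by linarith
  rw [Real.norm_of_nonneg (inv_nonneg.2 (pow_nonneg (hwc.le.trans hle) n))]
  gcongr

lemma hasDerivAt_integral_div_add_pow (hg : Integrable g μ) (hφ : AEMeasurable φ μ)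
    (hc : ∀ᵐ t ∂μ, -c ≤ φ t) {w : ℝ} (hw : c < w) (n : ℕ) :
    HasDerivAt (fun w => ∫ t, g t / (w + φ t) ^ n ∂μ)
      (-n * ∫ t, g t / (w + φ t) ^ (n + 1) ∂μ) w := by
  obtain ⟨m, hcm, hmw⟩ := exists_between hw
  rw [← integral_const_mul]
  refine (hasDerivAt_integral_of_dominated_loc_of_deriv_le (Ioi_mem_nhds hmw) ?_
    (integrable_div_add_pow hg hφ hc hw n)
    (F' := fun x t => -n * (g t / (x + φ t) ^ (n + 1)))
    ((integrable_div_add_pow hg hφ hc hw (n + 1)).const_mul _).aestronglyMeasurable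
    (bound := fun t => ‖-(n : ℝ) * (g t / (m + φ t) ^ (n + 1))‖) ?_
    ((integrable_div_add_pow hg hφ hc hcm (n + 1)).const_mul _).norm ?_).2
  · filter_upwards [Ioi_mem_nhds hw] with x hx
    exact (integrable_div_add_pow hg hφ hc hx n).aestronglyMeasurable
  · filter_upwards [hc] with t ht x hx
    have hm : 0 < m + φ t := by linarith
    have hmx : m + φ t ≤ x + φ t := by linarith [mem_Ioi.1 hx]
    simp only [norm_mul, norm_div, norm_pow, Real.norm_of_nonneg hm.le,
      Real.norm_of_nonneg (hm.le.trans hmx)]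
    gcongr
  · filter_upwards [hc] with t ht x hx
    exact hasDerivAt_const_div_add_pow (g t) (φ t) n (by linarith [mem_Ioi.1 hx])

lemma completelyMonotoneOn_integral_div_add (hg : Integrable g μ) (hg₀ : 0 ≤ᵐ[μ] g)
    (hφ : AEMeasurable φ μ) (hc : ∀ᵐ t ∂μ, -c ≤ φ t) :
    CompletelyMonotoneOn (fun w => ∫ t, g t / (w + φ t) ∂μ) (Ioi c) := by
  have h := completelyMonotoneOn_of_hasDerivAt_neg_succ
    (F := fun n w => n.factorial * ∫ t, g t / (w + φ t) ^ (n + 1) ∂μ) (isOpen_Ioi (a := c))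
    (fun n w hw => ?_) (fun n w hw => ?_)
  · simpa only [Nat.factorial_zero, Nat.cast_one, one_mul, zero_add, pow_one] using h
  · refine ((hasDerivAt_integral_div_add_pow hg hφ hc hw (n + 1)).const_mul _).congr_deriv ?_
    rw [Nat.factorial_succ]
    push_cast
    ring
  · refine mul_nonneg (Nat.cast_nonneg _) (integral_nonneg_of_ae ?_)
    filter_upwards [hg₀, hc] with t hgt hct
    exact div_nonneg hgt (pow_nonneg (by linarith [mem_Ioi.1 hw]) _)

end StieltjesTransform

section BetaStieltjes

/-- The unnormalised density of the beta distribution, with exponents `a` and `b` (so that the shape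
parameters are `a + 1` and `b + 1`). -/
noncomputable def betaWeight (a b t : ℝ) : ℝ := t ^ a * (1 - t) ^ b

/-- The integral of `(x + y t)⁻¹` against `betaWeight a b` on `[0, 1]`; up to a factor this is
Euler's integral for `₂F₁(1, a + 1; a + b + 2; -y / x)`. -/
noncomputable def betaStieltjes (a b x y : ℝ) : ℝ :=
  ∫ t in (0 : ℝ)..1, betaWeight a b t / (x + y * t)

variable {a b x y t : ℝ}

lemma betaWeight_nonneg (ht : t ∈ Icc (0 : ℝ) 1) : 0 ≤ betaWeight a b t :=
  mul_nonneg (Real.rpow_nonneg ht.1 _) (Real.rpow_nonneg (sub_nonneg.2 ht.2) _)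

lemma betaWeight_add_one (ha : -1 < a) (ht : 0 ≤ t) :
    betaWeight (a + 1) b t = t * betaWeight a b t := by
  rw [betaWeight, betaWeight, Real.rpow_add_one' ht (by linarith)]
  ring

lemma betaWeight_neg_half_neg_half (ht : t ∈ Icc (0 : ℝ) 1) :
    betaWeight (-(1 / 2)) (-(1 / 2)) t = (√(t * (1 - t)))⁻¹ := by
  rw [betaWeight, Real.rpow_neg ht.1, Real.rpow_neg (sub_nonneg.2 ht.2), ← Real.sqrt_eq_rpow,
    ← Real.sqrt_eq_rpow, Real.sqrt_mul ht.1, mul_inv]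

lemma ofReal_betaWeight (ht : t ∈ Icc (0 : ℝ) 1) :
    (betaWeight a b t : ℂ) =
      (t : ℂ) ^ (((a + 1 : ℝ) : ℂ) - 1) * (1 - (t : ℂ)) ^ (((b + 1 : ℝ) : ℂ) - 1) := by
  rw [betaWeight, Complex.ofReal_mul, Complex.ofReal_cpow ht.1,
    Complex.ofReal_cpow (sub_nonneg.2 ht.2)]
  push_cast
  simp only [add_sub_cancel_right]

lemma intervalIntegrable_betaWeight (ha : -1 < a) (hb : -1 < b) :
    IntervalIntegrable (betaWeight a b) volume 0 1 := by
  have h := Complex.betaIntegral_convergent (u := (a + 1 : ℝ)) (v := (b + 1 : ℝ))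
    (by rw [Complex.ofReal_re]; linarith) (by rw [Complex.ofReal_re]; linarith)
  refine h.norm.congr fun t ht => ?_
  have ht' : t ∈ Icc (0 : ℝ) 1 := Ioc_subset_Icc_self (by rwa [uIoc_of_le zero_le_one] at ht)
  simp only [← ofReal_betaWeight ht', Complex.norm_real,
    Real.norm_of_nonneg (betaWeight_nonneg ht')]

lemma integral_betaWeight (ha : -1 < a) (hb : -1 < b) :
    ∫ t in (0 : ℝ)..1, betaWeight a b t = ProbabilityTheory.beta (a + 1) (b + 1) := by
  have h : Complex.betaIntegral (a + 1 : ℝ) (b + 1 : ℝ)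
      = ((∫ t in (0 : ℝ)..1, betaWeight a b t : ℝ) : ℂ) := by
    rw [← intervalIntegral.integral_ofReal, Complex.betaIntegral]
    refine intervalIntegral.integral_congr fun t ht => (ofReal_betaWeight ?_).symm
    rwa [uIcc_of_le zero_le_one] at ht
  rw [ProbabilityTheory.beta_eq_betaIntegralReal _ _ (by linarith) (by linarith), h,
    Complex.ofReal_re]

lemma add_mul_pos_of_mem_Icc (hx : 0 < x) (hxy : 0 < x + y) (ht : t ∈ Icc (0 : ℝ) 1) :
    0 < x + y * t := by
  rcases ht.1.eq_or_lt with rfl | ht₀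
  · simpa only [mul_zero, add_zero] using hx
  · nlinarith [mul_pos ht₀ hxy, mul_nonneg (sub_nonneg.2 ht.2) hx.le]

lemma intervalIntegrable_betaWeight_div (ha : -1 < a) (hb : -1 < b) (hx : 0 < x) (hxy : 0 < x + y) :
    IntervalIntegrable (fun t => betaWeight a b t / (x + y * t)) volume 0 1 := by
  simp only [div_eq_mul_inv]
  refine (intervalIntegrable_betaWeight ha hb).mul_continuousOn
    (ContinuousOn.inv₀ (by fun_prop) fun t ht => ?_)
  rw [uIcc_of_le zero_le_one] at ht
  exact (add_mul_pos_of_mem_Icc hx hxy ht).ne'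

lemma betaStieltjes_add_one (ha : -1 < a) (hb : -1 < b) (hx : 0 < x) (hxy : 0 < x + y) :
    y * betaStieltjes (a + 1) b x y + x * betaStieltjes a b x y
      = ProbabilityTheory.beta (a + 1) (b + 1) := by
  have ha' : -1 < a + 1 := by linarith
  simp only [betaStieltjes, ← intervalIntegral.integral_const_mul]
  rw [← integral_betaWeight ha hb, ← intervalIntegral.integral_add
    ((intervalIntegrable_betaWeight_div ha' hb hx hxy).const_mul y)
    ((intervalIntegrable_betaWeight_div ha hb hx hxy).const_mul x)]
  refine intervalIntegral.integral_congr fun t ht => ?_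
  rw [uIcc_of_le zero_le_one] at ht
  have hd := (add_mul_pos_of_mem_Icc hx hxy ht).ne'
  simp only [betaWeight_add_one ha ht.1]
  field_simp
  ring

lemma one_sub_linearFractional_sq (hd : x + y * t ≠ 0) :
    1 - ((x - (2 * x + y) * t) / (x + y * t)) ^ 2
      = 4 * (x * (x + y)) * (t * (1 - t)) / (x + y * t) ^ 2 := by
  field_simp
  ring

lemma hasDerivAt_arccos_linearFractional (hx : 0 < x) (hxy : 0 < x + y) (ht : t ∈ Ioo (0 : ℝ) 1) :
    HasDerivAt (fun t => Real.arccos ((x - (2 * x + y) * t) / (x + y * t)))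
      (√(x * (x + y)) * (betaWeight (-(1 / 2)) (-(1 / 2)) t / (x + y * t))) t := by
  have hd := add_mul_pos_of_mem_Icc hx hxy (Ioo_subset_Icc_self ht)
  have htt : 0 < t * (1 - t) := mul_pos ht.1 (sub_pos.2 ht.2)
  have hX : 0 < x * (x + y) := mul_pos hx hxy
  have hsq := one_sub_linearFractional_sq hd.ne'
  have hquot : HasDerivAt (fun t => (x - (2 * x + y) * t) / (x + y * t))
      (-(2 * (x * (x + y))) / (x + y * t) ^ 2) t := by
    refine ((((hasDerivAt_id t).const_mul (2 * x + y)).const_sub x).fun_div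
      (((hasDerivAt_id t).const_mul y).const_add x) hd.ne').congr_deriv ?_
    simp only [id]
    ring
  set r := (x - (2 * x + y) * t) / (x + y * t)
  have hr : 0 < 1 - r ^ 2 := by rw [hsq]; positivity
  have hr_neg_one : r ≠ -1 := by intro h; rw [h] at hr; norm_num at hr
  have hr_one : r ≠ 1 := by intro h; rw [h] at hr; norm_num at hr
  have hsqrt : √(1 - r ^ 2) = 2 * √(x * (x + y)) * √(t * (1 - t)) / (x + y * t) := by
    rw [hsq, Real.sqrt_div (by positivity), Real.sqrt_sq hd.le, Real.sqrt_mul (by positivity),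
      Real.sqrt_mul (by positivity), show √(4 : ℝ) = 2 by norm_num]
  refine ((Real.hasDerivAt_arccos hr_neg_one hr_one).comp t hquot).congr_deriv ?_
  rw [hsqrt, betaWeight_neg_half_neg_half (Ioo_subset_Icc_self ht)]
  field_simp
  exact (Real.sq_sqrt hX.le).symm

lemma betaStieltjes_neg_half_neg_half (hx : 0 < x) (hxy : 0 < x + y) :
    betaStieltjes (-(1 / 2)) (-(1 / 2)) x y = Real.pi / √(x * (x + y)) := by
  have hcont : ContinuousOn (fun t => Real.arccos ((x - (2 * x + y) * t) / (x + y * t)))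
      (Icc 0 1) :=
    Real.continuous_arccos.comp_continuousOn (ContinuousOn.div (by fun_prop) (by fun_prop)
      fun t ht => (add_mul_pos_of_mem_Icc hx hxy ht).ne')
  have hint := (intervalIntegrable_betaWeight_div (a := -(1 / 2)) (b := -(1 / 2)) (by norm_num)
    (by norm_num) hx hxy).const_mul √(x * (x + y))
  have hftc := intervalIntegral.integral_eq_sub_of_hasDerivAt_of_le zero_le_one hcont
    (fun t ht => hasDerivAt_arccos_linearFractional hx hxy ht) hint
  have h₀ : (x - (2 * x + y) * 0) / (x + y * 0) = 1 := by
    rw [mul_zero, mul_zero, sub_zero, add_zero, div_self hx.ne']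
  have h₁ : (x - (2 * x + y) * 1) / (x + y * 1) = -1 := by
    rw [mul_one, mul_one, div_eq_iff hxy.ne']
    ring
  rw [intervalIntegral.integral_const_mul, h₀, h₁, Real.arccos_one, Real.arccos_neg_one,
    sub_zero] at hftc
  rw [eq_div_iff (Real.sqrt_pos.2 (mul_pos hx hxy)).ne', mul_comm]
  exact hftc

lemma completelyMonotoneOn_betaStieltjes (ha : -1 < a) (hb : -1 < b) (hy : 0 ≤ y) (c : ℝ) :
    CompletelyMonotoneOn (fun w => betaStieltjes a b (w - c) y) (Ioi c) := by
  have hint := (intervalIntegrable_iff_integrableOn_Ioc_of_le zero_le_one).1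
    (intervalIntegrable_betaWeight ha hb)
  have hnonneg : 0 ≤ᵐ[volume.restrict (Ioc (0 : ℝ) 1)] betaWeight a b :=
    ae_restrict_of_forall_mem measurableSet_Ioc fun t ht =>
      betaWeight_nonneg (Ioc_subset_Icc_self ht)
  have hlower : ∀ᵐ t ∂volume.restrict (Ioc (0 : ℝ) 1), -c ≤ y * t - c :=
    ae_restrict_of_forall_mem measurableSet_Ioc fun t ht => by
      linarith [mul_nonneg hy ht.1.le]
  refine (completelyMonotoneOn_integral_div_add hint hnonneg (by fun_prop) hlower).congr
    isOpen_Ioi fun w _ => ?_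
  simp only [betaStieltjes, intervalIntegral.integral_of_le zero_le_one, add_sub_assoc',
    sub_add_eq_add_sub]

end BetaStieltjes

section HalfIntegerGamma

lemma Gamma_nat_add_half_eq_factorial (k : ℕ) :
    Real.Gamma (k + 1 / 2) = (2 * k).factorial * √Real.pi / (4 ^ k * k.factorial) := by
  have hfact : (2 * k).factorial = (2 * k).doubleFactorial * (2 * k - 1).doubleFactorial := by
    cases k with
    | zero => rfl
    | succ k => exact Nat.factorial_eq_mul_doubleFactorial (2 * k + 1)
  rw [Real.Gamma_nat_add_half, hfact, Nat.doubleFactorial_two_mul,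
    show (4 : ℝ) = 2 * 2 by norm_num, mul_pow]
  push_cast
  field_simp

lemma beta_nat_add_half_half (k : ℕ) :
    ProbabilityTheory.beta (k + 1 / 2) (1 / 2) = Real.pi * k.centralBinom / 4 ^ k := by
  rw [ProbabilityTheory.beta, add_assoc, add_halves, Real.Gamma_nat_eq_factorial,
    Gamma_nat_add_half_eq_factorial, Real.Gamma_one_half_eq, Nat.centralBinom,
    Nat.cast_choose ℝ (Nat.le_mul_of_pos_left k two_pos), two_mul, Nat.add_sub_cancel]
  field_simp
  rw [Real.sq_sqrt Real.pi_pos.le]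

lemma factorial_div_Gamma_nat_add_half (k : ℕ) :
    ((2 * k).factorial : ℝ) / (√Real.pi * k.factorial * Real.Gamma (k + 1 / 2))
      = 4 ^ k / Real.pi := by
  rw [Gamma_nat_add_half_eq_factorial]
  field_simp
  rw [Real.sq_sqrt Real.pi_pos.le]

end HalfIntegerGamma

section Delta

lemma sum_second_pascal_mul_pow {R : Type*} [CommRing R] (c : ℕ → R) (x : R) (N : ℕ) :
    x * ∑ n ∈ Finset.range N, (c n + 2 * c (n + 1) + c (n + 2)) * x ^ (n + 1)
      = (1 + x) ^ 2 * ∑ n ∈ Finset.range N, c n * x ^ n - c 0 - (c 1 + 2 * c 0) * x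
        + c N * x ^ N + (c (N + 1) + 2 * c N) * x ^ (N + 1) := by
  induction N with
  | zero => simp only [Finset.sum_range_zero]; ring
  | succ N ih => rw [Finset.sum_range_succ, Finset.sum_range_succ, mul_add, ih]; ring

lemma choose_add_two_add_two (m j : ℕ) :
    (m + 2).choose (j + 2) = m.choose j + 2 * m.choose (j + 1) + m.choose (j + 2) := by
  rw [Nat.choose_succ_succ, Nat.choose_succ_succ, Nat.choose_succ_succ m (j + 1)]
  ring

lemma centralBinom_succ_eq (k : ℕ) :
    (k + 1).centralBinom = 2 * (k.centralBinom + (2 * k).choose (k + 1)) := by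
  have hsymm : (2 * k + 1).choose k = (2 * k + 1).choose (k + 1) :=
    Nat.choose_symm_of_eq_add (by ring)
  rw [Nat.centralBinom, mul_add_one, Nat.choose_succ_succ, hsymm, Nat.choose_succ_succ,
    Nat.centralBinom]
  ring

lemma Pk_succ_eq_sum (k : ℕ) (q : ℝ) :
    Pk (k + 1) q = (k + 1).centralBinom + ∑ n ∈ Finset.range (k + 1),
      ((2 * k).choose (n + k) + 2 * (2 * k).choose (n + 1 + k) + (2 * k).choose (n + 2 + k) : ℝ)
        * (-q) ^ (n + 1) := by
  rw [Pk, Finset.sum_range_succ', zero_add, pow_zero, mul_one, ← Nat.centralBinom, add_comm]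
  refine congrArg _ (Finset.sum_congr rfl fun n _ => ?_)
  rw [mul_add_one, show n + 1 + (k + 1) = n + k + 2 by ring, choose_add_two_add_two,
    add_right_comm n k 1, add_right_comm n k 2]
  push_cast
  rfl

lemma mul_Pk_succ (k : ℕ) (q : ℝ) :
    q * Pk (k + 1) q
      = k.centralBinom + (2 * k).choose (k + 1) * q - (1 - q) ^ 2 * Pk k q := by
  have hsum := sum_second_pascal_mul_pow (fun n => ((2 * k).choose (n + k) : ℝ)) (-q) (k + 1)
  have hzero (n : ℕ) (hn : k < n) : (2 * k).choose (n + k) = 0 :=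
    Nat.choose_eq_zero_of_lt (by lia)
  simp only [hzero (k + 1) (by lia), hzero (k + 1 + 1) (by lia), zero_add, add_comm 1 k,
    Nat.cast_zero, mul_zero, zero_mul, add_zero] at hsum
  rw [Pk_succ_eq_sum, centralBinom_succ_eq, Pk, Nat.centralBinom]
  push_cast
  linear_combination -hsum

lemma one_lt_vOf {w : ℝ} (hw : 2 < w) : 1 < vOf w := by
  have := Real.sqrt_nonneg (w ^ 2 - 4)
  rw [vOf]
  linarith

lemma inv_vOf {w : ℝ} (hw : 2 ≤ w) : (vOf w)⁻¹ = (w - √(w ^ 2 - 4)) / 2 := by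
  have hsq : √(w ^ 2 - 4) ^ 2 = w ^ 2 - 4 := Real.sq_sqrt (by nlinarith)
  refine inv_eq_of_mul_eq_one_right ?_
  rw [vOf]
  linear_combination -hsq / 4

lemma vOf_add_inv {w : ℝ} (hw : 2 ≤ w) : vOf w + (vOf w)⁻¹ = w := by
  rw [inv_vOf hw, vOf]
  ring

lemma vOf_sub_inv {w : ℝ} (hw : 2 ≤ w) : vOf w - (vOf w)⁻¹ = √(w ^ 2 - 4) := by
  rw [inv_vOf hw, vOf]
  ring

lemma DeltaKU_one_eq (k : ℕ) {w : ℝ} (hw : 2 < w) :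
    DeltaKU k 1 w = (2 * Pk k (vOf w)⁻¹ - k.centralBinom) / (vOf w - (vOf w)⁻¹) := by
  have hv := one_lt_vOf hw
  rw [DeltaKU, one_mul, one_div, psiK, if_pos hv.le, psiK, if_neg (inv_lt_one_of_one_lt₀ hv).not_ge,
    Pkhat, Nat.centralBinom]
  ring

lemma DeltaKU_zero_one {w : ℝ} (hw : 2 < w) : DeltaKU 0 1 w = 1 / √(w ^ 2 - 4) := by
  rw [DeltaKU_one_eq 0 hw, vOf_sub_inv hw.le]
  norm_num [Pk]

lemma DeltaKU_succ_one (k : ℕ) {w : ℝ} (hw : 2 < w) :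
    DeltaKU (k + 1) 1 w = k.centralBinom - (w - 2) * DeltaKU k 1 w := by
  have hv := one_lt_vOf hw
  have hadd := vOf_add_inv hw.le
  have hsub : vOf w - (vOf w)⁻¹ ≠ 0 := (sub_pos.2 ((inv_lt_one_of_one_lt₀ hv).trans hv)).ne'
  have hmul : vOf w * (vOf w)⁻¹ = 1 := mul_inv_cancel₀ (by linarith)
  have hP : Pk (k + 1) (vOf w)⁻¹
      = k.centralBinom * vOf w + (2 * k).choose (k + 1) - (w - 2) * Pk k (vOf w)⁻¹ := by
    linear_combination vOf w * mul_Pk_succ k (vOf w)⁻¹ - Pk k (vOf w)⁻¹ * hadd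
      + (-Pk (k + 1) (vOf w)⁻¹ + (2 * k).choose (k + 1) + (2 - (vOf w)⁻¹) * Pk k (vOf w)⁻¹) * hmul
  rw [DeltaKU_one_eq _ hw, DeltaKU_one_eq k hw, centralBinom_succ_eq, hP,
    div_eq_iff hsub, sub_mul (k.centralBinom : ℝ), mul_assoc (w - 2), div_mul_cancel₀ _ hsub]
  push_cast
  linear_combination k.centralBinom * hadd

lemma DeltaKU_one_eq_betaStieltjes (k : ℕ) {w : ℝ} (hw : 2 < w) :
    DeltaKU k 1 w = 4 ^ k / Real.pi * betaStieltjes (k - 1 / 2) (-(1 / 2)) (w - 2) 4 := by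
  have hx : 0 < w - 2 := sub_pos.2 hw
  have hxy : 0 < w - 2 + 4 := by linarith
  induction k with
  | zero =>
    rw [DeltaKU_zero_one hw, Nat.cast_zero, zero_sub, betaStieltjes_neg_half_neg_half hx hxy,
      show (w - 2) * (w - 2 + 4) = w ^ 2 - 4 by ring]
    field_simp
  | succ k ih =>
    have hk : (-1 : ℝ) < k - 1 / 2 := by linarith [k.cast_nonneg (α := ℝ)]
    have hrec := betaStieltjes_add_one hk (b := -(1 / 2)) (by norm_num) hx hxy
    rw [show (k : ℝ) - 1 / 2 + 1 = k + 1 / 2 by ring, show -(1 / 2 : ℝ) + 1 = 1 / 2 by norm_num,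
      beta_nat_add_half_half] at hrec
    rw [DeltaKU_succ_one k hw, ih, Nat.cast_succ, show (k : ℝ) + 1 - 1 / 2 = k + 1 / 2 by ring]
    field_simp at hrec ⊢
    linear_combination -hrec

end Delta

/-- for `k ≥ 1` and `w > 2`,
`Δ_{k,1}(w) = ((2k)!/(√π k! Γ(k+1/2))) ∫₀¹ t^{k-1/2} (1-t)^{-1/2} / (w-2+4t) dt`;
consequently `Δ_{k,1}` is completely monotone on `(2,∞)`. -/
theorem deltaK1_completely_monotone (k : ℕ) (hk : 1 ≤ k) :
    (∀ w > 2, DeltaKU k 1 w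
      = ((2 * k).factorial : ℝ) /
          (Real.sqrt Real.pi * (k.factorial : ℝ) * Real.Gamma ((k : ℝ) + 1 / 2)) *
        ∫ t in (0 : ℝ)..1,
          t ^ ((k : ℝ) - 1 / 2) * (1 - t) ^ (-(1 / 2) : ℝ) / (w - 2 + 4 * t)) ∧
    ContDiffOn ℝ (⊤ : ℕ∞) (DeltaKU k 1) (Ioi 2) ∧
    ∀ n : ℕ, ∀ w > 2, 0 ≤ (-1 : ℝ) ^ n * iteratedDeriv n (DeltaKU k 1) w := by
  have hΔ : EqOn (DeltaKU k 1)
      (fun w => 4 ^ k / Real.pi * betaStieltjes (k - 1 / 2) (-(1 / 2)) (w - 2) 4) (Ioi 2) :=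
    fun w hw => DeltaKU_one_eq_betaStieltjes k hw
  have hexp : (-1 : ℝ) < k - 1 / 2 := by linarith [k.cast_nonneg (α := ℝ)]
  have hcm := completelyMonotoneOn_betaStieltjes hexp (b := -(1 / 2)) (by norm_num) zero_le_four 2
  refine ⟨fun w hw => ?_, (hcm.const_mul (by positivity)).congr isOpen_Ioi hΔ⟩
  rw [factorial_div_Gamma_nat_add_half]
  exact hΔ hw
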